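/- arXiv:1805.01121 — 2 statements merged into one kernel-verified Lean document; each statement's English description precedes it below -/
import Mathlib

section
/- Let n be a positive integer, let q be a real number with 0 < q < 1, and let z > 0 be real. Then ∏_{k=0}^{n-1} Γ_q(z + k/n) = (((q; q)_∞)^n (1-q)^{(n-1)/2} / (q^{1/n}; q^{1/n})_∞) · ((1-q)/(1-q^{1/n}))^{1-nz} · Γ_{q^{1/n}}(nz). -/
/-- Infinite q-Pochhammer symbol `(a; q)_∞ = ∏_{i=0}^∞ (1 - a qⁱ)` (real version). -/
noncomputable def qPochR (a q : ℝ) : ℝ := ∏' i : ℕ, (1 - a * q ^ i)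

/-- The q-gamma function `Γ_q(z) = ((q;q)_∞ / (q^z;q)_∞) (1-q)^{1-z}` for `0 < q < 1`. -/
noncomputable def qGamma (q z : ℝ) : ℝ :=
  qPochR q q / qPochR (q ^ z) q * (1 - q) ^ (1 - z)

/-- The range `0, …, n * m - 1` split according to residues modulo `n`. -/
lemma prod_range_prod_range_add_mul {M : Type*} [CommMonoid M] (f : ℕ → M) (n m : ℕ) :
    ∏ k ∈ Finset.range n, ∏ i ∈ Finset.range m, f (k + n * i) =
      ∏ j ∈ Finset.range (n * m), f j := by
  induction m with
  | zero => simp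
  | succ m ih =>
    simp_rw [Finset.prod_range_succ, Finset.prod_mul_distrib, ih, Nat.mul_succ,
      Finset.prod_range_add, add_comm]

lemma summable_norm_neg_mul_pow (a : ℝ) {q : ℝ} (hq0 : 0 ≤ q) (hq1 : q < 1) :
    Summable fun i : ℕ => ‖-(a * q ^ i)‖ := by
  simpa using ((summable_geometric_of_lt_one hq0 hq1).mul_left a).norm

lemma multipliable_one_sub_mul_pow (a : ℝ) {q : ℝ} (hq0 : 0 ≤ q) (hq1 : q < 1) :
    Multipliable fun i : ℕ => 1 - a * q ^ i := by
  simpa only [sub_eq_add_neg] using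
    multipliable_one_add_of_summable (summable_norm_neg_mul_pow a hq0 hq1)

lemma qPochR_self_ne_zero {q : ℝ} (hq0 : 0 ≤ q) (hq1 : q < 1) : qPochR q q ≠ 0 := by
  simp only [qPochR, sub_eq_add_neg]
  refine tprod_one_add_ne_zero_of_summable (fun i => ?_) (summable_norm_neg_mul_pow q hq0 hq1)
  have h : q ^ (i + 1) < 1 := pow_lt_one₀ hq0 hq1 i.succ_ne_zero
  rw [pow_succ'] at h
  linarith

/-- `∏_{k<n} (a pᵏ; pⁿ)_∞ = (a; p)_∞`. -/
lemma prod_qPochR_mul_pow (a : ℝ) {p : ℝ} (hp0 : 0 ≤ p) (hp1 : p < 1) {n : ℕ} (hn : 0 < n) :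
    ∏ k ∈ Finset.range n, qPochR (a * p ^ k) (p ^ n) = qPochR a p := by
  have hlim : Filter.Tendsto
      (fun m => ∏ k ∈ Finset.range n, ∏ i ∈ Finset.range m, (1 - a * p ^ k * (p ^ n) ^ i))
      Filter.atTop (nhds (∏ k ∈ Finset.range n, qPochR (a * p ^ k) (p ^ n))) :=
    tendsto_finsetProd _ fun k _ => (multipliable_one_sub_mul_pow (a * p ^ k)
      (pow_nonneg hp0 n) (pow_lt_one₀ hp0 hp1 hn.ne')).tendsto_prod_tprod_nat
  have hlim' := (multipliable_one_sub_mul_pow a hp0 hp1).tendsto_prod_tprod_nat.comp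
    (Filter.tendsto_id.const_mul_atTop' hn)
  refine tendsto_nhds_unique hlim (hlim'.congr fun m => ?_)
  simp only [Function.comp_apply, id, ← prod_range_prod_range_add_mul, pow_add, pow_mul, mul_assoc]

lemma sum_range_one_sub_add_div {n : ℕ} (hn : 0 < n) (z : ℝ) :
    ∑ k ∈ Finset.range n, (1 - (z + (k : ℝ) / n)) = ((n : ℝ) - 1) / 2 + (1 - n * z) := by
  have hn' : (n : ℝ) ≠ 0 := by positivity
  have h : (∑ k ∈ Finset.range n, (k : ℝ)) * 2 = n * (n - 1) := by
    have := Finset.sum_range_id_mul_two n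
    rw [← Nat.cast_inj (R := ℝ)] at this
    simpa [Nat.cast_sub hn] using this
  simp only [Finset.sum_sub_distrib, Finset.sum_add_distrib, ← Finset.sum_div, Finset.sum_const,
    Finset.card_range, nsmul_eq_mul]
  rw [eq_div_of_mul_eq two_ne_zero h]
  field_simp
  ring

theorem q_gauss_multiplication_general (n : ℕ) (hn : 0 < n) (q : ℝ)
    (hq0 : 0 < q) (hq1 : q < 1) (z : ℝ) (hz : 0 < z) :
    ∏ k ∈ Finset.range n, qGamma q (z + (k : ℝ) / n) =
      (qPochR q q) ^ n * (1 - q) ^ (((n : ℝ) - 1) / 2) /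
          qPochR (q ^ ((1 : ℝ) / n)) (q ^ ((1 : ℝ) / n)) *
        ((1 - q) / (1 - q ^ ((1 : ℝ) / n))) ^ (1 - (n : ℝ) * z) *
        qGamma (q ^ ((1 : ℝ) / n)) ((n : ℝ) * z) := by
  have hn' : (n : ℝ) ≠ 0 := by positivity
  obtain ⟨p, hp⟩ : ∃ p, p = q ^ ((1 : ℝ) / n) := ⟨_, rfl⟩
  have hp0 : 0 < p := hp ▸ Real.rpow_pos_of_pos hq0 _
  have hp1 : p < 1 := hp ▸ Real.rpow_lt_one hq0.le hq1 (by positivity)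
  have hpn : p ^ n = q := by
    rw [hp, ← Real.rpow_natCast, ← Real.rpow_mul hq0.le, one_div_mul_cancel hn', Real.rpow_one]
  have hpz : p ^ ((n : ℝ) * z) = q ^ z := by
    rw [Real.rpow_mul hp0.le, Real.rpow_natCast, hpn]
  have hqk (k : ℕ) : q ^ (z + (k : ℝ) / n) = q ^ z * p ^ k := by
    rw [Real.rpow_add hq0, hp, ← Real.rpow_natCast, ← Real.rpow_mul hq0.le, one_div_mul_eq_div]
  have hprod : ∏ k ∈ Finset.range n, qPochR (q ^ z * p ^ k) q = qPochR (q ^ z) p := by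
    simpa only [hpn] using prod_qPochR_mul_pow (q ^ z) hp0.le hp1 hn
  have hP : qPochR p p ≠ 0 := qPochR_self_ne_zero hp0.le hp1
  have hp1' : (1 - p) ^ (1 - (n : ℝ) * z) ≠ 0 := (Real.rpow_pos_of_pos (sub_pos.2 hp1) _).ne'
  rw [← hp]
  simp only [qGamma, hqk, hpz, Finset.prod_mul_distrib, Finset.prod_div_distrib, Finset.prod_const,
    Finset.card_range, hprod]
  rw [← Real.rpow_sum_of_pos (sub_pos.2 hq1), sum_range_one_sub_add_div hn,
    Real.rpow_add (sub_pos.2 hq1), Real.div_rpow (sub_pos.2 hq1).le (sub_pos.2 hp1).le]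
  field_simp
end

section
/- Let n ≥ 3 be an integer, let τ be a complex number with Im(τ) > 0, set q = e^{πiτ} and τ' = -1/τ. Then (θ₁(π/n | τ'/n))² · ∏_{j=2}^{n-2} θ₁(jπ/n | τ'/n), divided by (θ₁(π/2 | τ'/n))^{n-1}, equals q^{(n-2)(n-1)/12} · ((q²; q²)_∞)² / (((q^{2n}; q^{2n})_∞)² ((q^n; q^{2n})_∞)^{2n-2}), where q^{(n-2)(n-1)/12} denotes e^{πiτ(n-2)(n-1)/12}. -/
open Complex

/-- Infinite q-Pochhammer symbol `(a; q)_∞ = ∏_{i=0}^∞ (1 - a qⁱ)`. -/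
noncomputable def qPoch (a q : ℂ) : ℂ := ∏' i : ℕ, (1 - a * q ^ i)

/-- Jacobi's first theta function
`θ₁(z | τ) = 2 ∑_{n=0}^∞ (-1)ⁿ e^{πiτ(2n+1)²/4} sin((2n+1)z)`. -/
noncomputable def theta1 (z τ : ℂ) : ℂ :=
  2 * ∑' n : ℕ, (-1 : ℂ) ^ n * Complex.exp (Real.pi * Complex.I * τ * (2 * n + 1) ^ 2 / 4) *
    Complex.sin ((2 * n + 1) * z)

open Filter Topology

/-- The finite `p`-Pochhammer symbol `(p; p)_n = ∏_{i<n} (1 - p^{i+1})`. -/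
noncomputable def finitePoch (p : ℂ) (n : ℕ) : ℂ := ∏ i ∈ Finset.range n, (1 - p * p ^ i)

/-- The reciprocal `1 / (p; p)_m`, extended by zero to negative integers `m`. -/
noncomputable def invPoch (p : ℂ) : ℤ → ℂ
  | Int.ofNat m => (finitePoch p m)⁻¹
  | Int.negSucc _ => 0

lemma one_sub_mul_pow_ne_zero {p : ℂ} (hp : ‖p‖ < 1) (i : ℕ) : 1 - p * p ^ i ≠ 0 := by
  intro h
  have h1 : ‖p ^ (i + 1)‖ = 1 := by
    rw [pow_succ', ← sub_eq_zero.mp h, norm_one]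
  rw [norm_pow] at h1
  exact (pow_lt_one₀ (norm_nonneg p) hp i.succ_ne_zero).ne h1

lemma finitePoch_ne_zero {p : ℂ} (hp : ‖p‖ < 1) (n : ℕ) : finitePoch p n ≠ 0 :=
  Finset.prod_ne_zero_iff.mpr fun i _ ↦ one_sub_mul_pow_ne_zero hp i

lemma invPoch_sub_one {p : ℂ} (hp : ‖p‖ < 1) (m : ℤ) :
    invPoch p (m - 1) = (1 - p ^ m) * invPoch p m := by
  rcases m with (_ | m) | m
  · have h : invPoch p (-1) = 0 := rfl
    simp [h]
  · have h : Int.ofNat (m + 1) - 1 = Int.ofNat m := by simp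
    have h1 := one_sub_mul_pow_ne_zero hp m
    have h2 := finitePoch_ne_zero hp m
    rw [h]
    simp only [invPoch]
    rw [finitePoch, finitePoch, Finset.prod_range_succ, ← finitePoch]
    rw [show p ^ (Int.ofNat (m + 1)) = p * p ^ m by
      rw [Int.ofNat_eq_natCast, zpow_natCast, pow_succ']]
    field_simp
  · have h : Int.negSucc m - 1 = Int.negSucc (m + 1) := by omega
    rw [h]
    simp [invPoch]

/-- The finite form of Jacobi's triple product identity. -/
lemma hasSum_finite_triple_product {Q x : ℂ} (hQ0 : Q ≠ 0) (hQ : ‖Q‖ < 1) (hx : x ≠ 0) (N : ℕ) :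
    HasSum (fun k : ℤ ↦ finitePoch (Q ^ 2) (2 * N) * invPoch (Q ^ 2) (N - k) *
        invPoch (Q ^ 2) (N + k) * (Q ^ (k ^ 2) * x ^ k))
      (∏ i ∈ Finset.range N, ((1 + Q * x * (Q ^ 2) ^ i) * (1 + Q / x * (Q ^ 2) ^ i))) := by
  have hp : ‖Q ^ 2‖ < 1 := by
    rw [norm_pow]; exact pow_lt_one₀ (norm_nonneg Q) hQ two_ne_zero
  induction N with
  | zero =>
    have h0 : invPoch (Q ^ 2) 0 = 1 := by
      rw [← Int.ofNat_zero]; simp [invPoch, finitePoch]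
    have h := hasSum_single (f := fun k : ℤ ↦ finitePoch (Q ^ 2) (2 * 0) *
      invPoch (Q ^ 2) ((0 : ℕ) - k) * invPoch (Q ^ 2) ((0 : ℕ) + k) * (Q ^ (k ^ 2) * x ^ k)) 0 ?_
    · simpa [h0, finitePoch] using h
    · intro k hk
      rcases lt_or_gt_of_ne hk with h | h
      · obtain ⟨m, rfl⟩ := Int.eq_negSucc_of_lt_zero h
        simp [invPoch]
      · obtain ⟨m, hm⟩ := Int.eq_negSucc_of_lt_zero (neg_lt_zero.mpr h)
        simp [hm, invPoch]
  | succ N ih =>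
    rw [Finset.prod_range_succ]
    have h1 := ih.mul_right (1 + (Q * (Q ^ 2) ^ N) ^ 2)
    have h2 := ((Equiv.subRight (1 : ℤ)).hasSum_iff.mpr ih).mul_right (Q * (Q ^ 2) ^ N * x)
    have h3 := ((Equiv.addRight (1 : ℤ)).hasSum_iff.mpr ih).mul_right (Q * (Q ^ 2) ^ N / x)
    convert! (h1.add h2).add h3 using 1
    · funext k
      simp only [Function.comp_apply, Equiv.subRight_apply, Equiv.coe_addRight]
      have e1 := invPoch_sub_one hp (N + 1 - k)
      have e2 := invPoch_sub_one hp (N - k)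
      have e3 := invPoch_sub_one hp (N + 1 + k)
      have e4 := invPoch_sub_one hp (N + k)
      rw [show (N + 1 - k - 1 : ℤ) = N - k by ring] at e1
      rw [show (N + 1 + k - 1 : ℤ) = N + k by ring] at e3
      rw [show (N - (k - 1) : ℤ) = N + 1 - k by ring, show (N + (k - 1) : ℤ) = N + k - 1 by ring,
        show (N - (k + 1) : ℤ) = N - k - 1 by ring, show (N + (k + 1) : ℤ) = N + 1 + k by ring,
        e2, e4, e1, e3, Nat.cast_succ]
      have eP : finitePoch (Q ^ 2) (2 * (N + 1)) = finitePoch (Q ^ 2) (2 * N) *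
          (1 - Q ^ 2 * (Q ^ N) ^ 4) * (1 - Q ^ 4 * (Q ^ N) ^ 4) := by
        rw [show 2 * (N + 1) = 2 * N + 1 + 1 by ring, finitePoch, Finset.prod_range_succ,
          Finset.prod_range_succ, ← finitePoch]
        ring
      rw [eP]
      have hb : Q ^ k ≠ 0 := zpow_ne_zero k hQ0
      rw [show (k - 1) ^ 2 = k ^ 2 - k - k + 1 by ring, show (k + 1) ^ 2 = k ^ 2 + k + k + 1 by ring]
      have hc : ∀ m : ℤ, (Q ^ 2) ^ m = (Q ^ m) ^ 2 := fun m ↦ by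
        rw [← zpow_natCast, ← zpow_natCast, ← zpow_mul, ← zpow_mul, mul_comm]
      simp only [hc, zpow_add₀ hQ0, zpow_sub₀ hQ0, zpow_add₀ hx, zpow_sub₀ hx, zpow_one,
        zpow_natCast, ← pow_mul]
      field_simp
      ring
    · field_simp
      ring

lemma summable_norm_mul_pow (a : ℂ) {p : ℂ} (hp : ‖p‖ < 1) :
    Summable fun i : ℕ ↦ ‖-(a * p ^ i)‖ := by
  simpa using (summable_geometric_of_lt_one (norm_nonneg p) hp).mul_left ‖a‖

lemma multipliable_qPoch (a : ℂ) {p : ℂ} (hp : ‖p‖ < 1) :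
    Multipliable fun i : ℕ ↦ 1 - a * p ^ i := by
  simpa [sub_eq_add_neg] using multipliable_one_add_of_summable (summable_norm_mul_pow a hp)

lemma tendsto_qPoch (a : ℂ) {p : ℂ} (hp : ‖p‖ < 1) :
    Tendsto (fun N ↦ ∏ i ∈ Finset.range N, (1 - a * p ^ i)) atTop (𝓝 (qPoch a p)) :=
  (multipliable_qPoch a hp).tendsto_prod_tprod_nat

lemma qPoch_ne_zero {a p : ℂ} (hp : ‖p‖ < 1) (ha : ∀ i : ℕ, 1 - a * p ^ i ≠ 0) :
    qPoch a p ≠ 0 := by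
  have := tprod_one_add_ne_zero_of_summable (f := fun i : ℕ ↦ -(a * p ^ i))
    (fun i ↦ by simpa [sub_eq_add_neg] using ha i) (summable_norm_mul_pow a hp)
  simpa [qPoch, sub_eq_add_neg] using this

lemma qPoch_self_eq_prod {p : ℂ} (hp : ‖p‖ < 1) {n : ℕ} (hn : n ≠ 0) :
    qPoch p p = ∏ j ∈ Finset.range n, qPoch (p ^ (j + 1)) (p ^ n) := by
  have hpn : ‖p ^ n‖ < 1 := by
    rw [norm_pow]; exact pow_lt_one₀ (norm_nonneg p) hp hn
  have h1 : Tendsto (fun N ↦ ∏ i ∈ Finset.range (n * N), (1 - p * p ^ i)) atTop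
      (𝓝 (qPoch p p)) :=
    (tendsto_qPoch p hp).comp (tendsto_id.const_mul_atTop' (Nat.pos_of_ne_zero hn))
  have h2 := tendsto_finsetProd (Finset.range n) fun j _ ↦ tendsto_qPoch (p ^ (j + 1)) hpn
  refine tendsto_nhds_unique h1 (h2.congr fun N ↦ ?_)
  induction N with
  | zero => simp
  | succ N ih =>
    simp only [Finset.prod_range_succ _ N, Finset.prod_mul_distrib, ih]
    rw [mul_add_one, Finset.prod_range_add]
    congr 1
    exact Finset.prod_congr rfl fun j _ ↦ by ring

lemma tendsto_invPoch {p : ℂ} (hp : ‖p‖ < 1) :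
    Tendsto (invPoch p) atTop (𝓝 (qPoch p p)⁻¹) := by
  have h := (tendsto_qPoch p hp).inv₀ (qPoch_ne_zero hp (one_sub_mul_pow_ne_zero hp))
  have h' := h.comp (show Tendsto Int.toNat atTop atTop from
    tendsto_atTop_atTop.mpr fun b ↦ ⟨(b : ℤ), fun a ha ↦ by omega⟩)
  refine h'.congr' ?_
  filter_upwards [eventually_ge_atTop 0] with m hm
  obtain ⟨m, rfl⟩ := Int.eq_ofNat_of_zero_le hm
  rfl

lemma exists_norm_invPoch_le {p : ℂ} (hp : ‖p‖ < 1) : ∃ C, ∀ m, ‖invPoch p m‖ ≤ C := by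
  have h := (tendsto_qPoch p hp).inv₀ (qPoch_ne_zero hp (one_sub_mul_pow_ne_zero hp))
  obtain ⟨C, hC⟩ := h.norm.bddAbove_range
  refine ⟨C, fun m ↦ ?_⟩
  have hC' : ∀ m, ‖(finitePoch p m)⁻¹‖ ≤ C := fun m ↦ hC ⟨m, rfl⟩
  cases m with
  | ofNat m => exact hC' m
  | negSucc m => simpa [invPoch] using (norm_nonneg _).trans (hC' 0)

/-- Jacobi's triple product identity. -/
theorem jacobiTheta₂_eq_qPoch (z : ℂ) {σ : ℂ} (hσ : 0 < σ.im) {Q : ℂ}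
    (hQ : Q = cexp (Real.pi * I * σ)) {x : ℂ} (hx : x = cexp (2 * Real.pi * I * z)) :
    jacobiTheta₂ z σ = qPoch (Q ^ 2) (Q ^ 2) *
      (qPoch (-(Q * x)) (Q ^ 2) * qPoch (-(Q / x)) (Q ^ 2)) := by
  have hQ0 : Q ≠ 0 := hQ ▸ Complex.exp_ne_zero _
  have hx0 : x ≠ 0 := hx ▸ Complex.exp_ne_zero _
  have hQ1 : ‖Q‖ < 1 := by
    rw [hQ, Complex.norm_exp, Real.exp_lt_one_iff]
    simpa using mul_pos Real.pi_pos hσ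
  have hp : ‖Q ^ 2‖ < 1 := by
    rw [norm_pow]; exact pow_lt_one₀ (norm_nonneg Q) hQ1 two_ne_zero
  have hterm : ∀ k : ℤ, Q ^ (k ^ 2) * x ^ k = jacobiTheta₂_term k z σ := fun k ↦ by
    rw [hQ, hx, ← Complex.exp_int_mul, ← Complex.exp_int_mul, ← Complex.exp_add, jacobiTheta₂_term]
    congr 1
    push_cast
    ring
  have hP := qPoch_ne_zero hp (one_sub_mul_pow_ne_zero hp)
  have hlim : Tendsto (fun N : ℕ ↦ ∑' k : ℤ, finitePoch (Q ^ 2) (2 * N) *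
        invPoch (Q ^ 2) (N - k) * invPoch (Q ^ 2) (N + k) * jacobiTheta₂_term k z σ) atTop
      (𝓝 (∑' k : ℤ, qPoch (Q ^ 2) (Q ^ 2) * (qPoch (Q ^ 2) (Q ^ 2))⁻¹ *
        (qPoch (Q ^ 2) (Q ^ 2))⁻¹ * jacobiTheta₂_term k z σ)) := by
    obtain ⟨C, hC⟩ := exists_norm_invPoch_le hp
    obtain ⟨D, hD⟩ := (tendsto_qPoch (Q ^ 2) hp).norm.bddAbove_range
    have hD' : ∀ m, ‖finitePoch (Q ^ 2) m‖ ≤ D := fun m ↦ hD ⟨m, rfl⟩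
    have hC0 : 0 ≤ C := (norm_nonneg _).trans (hC 0)
    have hD0 : 0 ≤ D := (norm_nonneg _).trans (hD' 0)
    refine tendsto_tsum_of_dominated_convergence
      (bound := fun k ↦ D * C * C * ‖jacobiTheta₂_term k z σ‖) ?_ ?_ ?_
    · exact ((summable_jacobiTheta₂_term_iff z σ).mpr hσ).norm.mul_left _
    · intro k
      have hN : Tendsto (fun N : ℕ ↦ (N : ℤ)) atTop atTop := tendsto_natCast_atTop_atTop
      have t1 : Tendsto (fun N : ℕ ↦ finitePoch (Q ^ 2) (2 * N)) atTop
          (𝓝 (qPoch (Q ^ 2) (Q ^ 2))) :=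
        (tendsto_qPoch (Q ^ 2) hp).comp (tendsto_id.const_mul_atTop' two_pos)
      have t2 := (tendsto_invPoch hp).comp (tendsto_atTop_add_const_right _ (-k) hN)
      have t3 := (tendsto_invPoch hp).comp (tendsto_atTop_add_const_right _ k hN)
      exact ((t1.mul t2).mul t3).mul_const _
    · refine .of_forall fun N k ↦ ?_
      rw [norm_mul, norm_mul, norm_mul]
      gcongr
      exacts [hD' _, hC _, hC _]
  have hprod := (tendsto_qPoch (-(Q * x)) hp).mul (tendsto_qPoch (-(Q / x)) hp)
  have heq := tendsto_nhds_unique hlim (hprod.congr fun N ↦ by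
    have h := (hasSum_finite_triple_product hQ0 hQ1 hx0 N).tsum_eq
    simp only [hterm] at h
    rw [h, Finset.prod_mul_distrib]
    simp only [neg_mul, sub_neg_eq_add])
  rw [tsum_mul_left, mul_inv_cancel₀ hP, one_mul] at heq
  rw [← heq, jacobiTheta₂, mul_inv_cancel_left₀ hP]

lemma theta1_eq_jacobiTheta₂ (z : ℂ) {τ : ℂ} (hτ : 0 < τ.im) :
    theta1 z τ = -I * cexp (Real.pi * I * τ / 4 + I * z) *
      jacobiTheta₂ (z / Real.pi - 1 / 2 + τ / 2) τ := by
  have hpi : (Real.pi : ℂ) ≠ 0 := by exact_mod_cast Real.pi_ne_zero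
  have h := ((hasSum_jacobiTheta₂_term (z / Real.pi - 1 / 2 + τ / 2) hτ).mul_left
    (-I * cexp (Real.pi * I * τ / 4 + I * z))).nat_add_neg_add_one
  rw [← h.tsum_eq, theta1, ← tsum_mul_left]
  refine tsum_congr fun n ↦ ?_
  have hs : ∀ m : ℕ, cexp (-(m * (Real.pi * I))) = (-1) ^ m := fun m ↦ by
    rw [Complex.exp_neg, Complex.exp_nat_mul, Complex.exp_pi_mul_I, ← inv_pow]; norm_num
  have hs' : ∀ m : ℕ, cexp (m * (Real.pi * I)) = (-1) ^ m := fun m ↦ by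
    rw [Complex.exp_nat_mul, Complex.exp_pi_mul_I]
  have e1 : cexp (Real.pi * I * τ / 4 + I * z) *
      jacobiTheta₂_term n (z / Real.pi - 1 / 2 + τ / 2) τ =
      (-1) ^ n * cexp (Real.pi * I * τ * (2 * n + 1) ^ 2 / 4) * cexp ((2 * n + 1) * z * I) := by
    rw [jacobiTheta₂_term, ← hs n, ← Complex.exp_add, ← Complex.exp_add, ← Complex.exp_add]
    congr 1
    push_cast
    field_simp
    ring
  have e2 : cexp (Real.pi * I * τ / 4 + I * z) *
      jacobiTheta₂_term (-(n + 1)) (z / Real.pi - 1 / 2 + τ / 2) τ =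
      -((-1) ^ n * cexp (Real.pi * I * τ * (2 * n + 1) ^ 2 / 4) *
        cexp (-((2 * n + 1) * z) * I)) := by
    rw [← neg_mul, ← neg_mul, ← neg_one_mul (_ ^ n), ← pow_succ', jacobiTheta₂_term, ← hs' (n + 1),
      ← Complex.exp_add, ← Complex.exp_add, ← Complex.exp_add]
    congr 1
    push_cast
    field_simp
    ring
  rw [mul_assoc (-I), mul_assoc (-I), e1, e2, Complex.sin]
  ring

/-- Jacobi's imaginary transformation of `θ₁`, in product form. -/
lemma theta1_pi_mul_neg_inv (t : ℂ) {σ : ℂ} (hσ : 0 < σ.im) {P y : ℂ}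
    (hP : P = cexp (2 * Real.pi * I * σ)) (hy : y = cexp (2 * Real.pi * I * σ * t)) :
    theta1 (Real.pi * t) (-1 / σ) = (-I * σ) ^ (1 / 2 : ℂ) * qPoch P P *
      cexp (Real.pi * I * σ * (t - 1 / 2) ^ 2) * (qPoch y P * qPoch (P / y) P) := by
  have hpi : (Real.pi : ℂ) ≠ 0 := by exact_mod_cast Real.pi_ne_zero
  have hσ0 : σ ≠ 0 := by rintro rfl; simp at hσ
  have him : 0 < (-1 / σ).im := by
    rw [neg_div, one_div, neg_im, inv_im, neg_div, neg_neg]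
    exact div_pos hσ (normSq_pos.mpr hσ0)
  set z := σ * (t - 1 / 2) - 1 / 2 with hz
  have hroot : (-I * σ) ^ (1 / 2 : ℂ) ≠ 0 := by simp [Complex.cpow_eq_zero_iff, hσ0]
  have hfe := jacobiTheta₂_functional_equation z σ
  have htp := jacobiTheta₂_eq_qPoch z hσ (Q := cexp (Real.pi * I * σ)) rfl rfl
  have hQ2 : cexp (Real.pi * I * σ) ^ 2 = P := by
    rw [hP, ← Complex.exp_nat_mul]; congr 1; push_cast; ring
  have hmul : -(cexp (Real.pi * I * σ) * cexp (2 * Real.pi * I * z)) = y := by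
    rw [← neg_one_mul, ← Complex.exp_pi_mul_I, hy, ← Complex.exp_add, ← Complex.exp_add]
    congr 1
    rw [hz]; ring
  have hdiv : -(cexp (Real.pi * I * σ) / cexp (2 * Real.pi * I * z)) = P / y := by
    rw [← hmul, ← hQ2]
    have h1 := Complex.exp_ne_zero (Real.pi * I * σ)
    have h2 := Complex.exp_ne_zero (2 * Real.pi * I * z)
    field_simp
  rw [hQ2, hmul, hdiv] at htp
  rw [theta1_eq_jacobiTheta₂ _ him,
    show Real.pi * t / Real.pi - 1 / 2 + -1 / σ / 2 = z / σ by rw [hz]; field_simp; ring]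
  have key : -I * cexp (Real.pi * I * (-1 / σ) / 4 + I * (Real.pi * t)) =
      cexp (Real.pi * I * σ * (t - 1 / 2) ^ 2) * cexp (-Real.pi * I * z ^ 2 / σ) := by
    have : -I = cexp (-(Real.pi / 2 * I)) := by
      rw [Complex.exp_neg, Complex.exp_pi_div_two_mul_I, Complex.inv_I]
    rw [this, ← Complex.exp_add, ← Complex.exp_add]
    congr 1
    rw [hz]
    field_simp
    ring
  rw [key]
  calc _ = (-I * σ) ^ (1 / 2 : ℂ) * cexp (Real.pi * I * σ * (t - 1 / 2) ^ 2) *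
        jacobiTheta₂ z σ := by
        rw [hfe]; field_simp
    _ = _ := by rw [htp]; ring

lemma sum_mul_div_sub_half_sq {c : ℂ} (hc : c ≠ 0) (m : ℕ) :
    ∑ j ∈ Finset.range m, c * (((j + 1 : ℕ) : ℂ) / c - 1 / 2) ^ 2 =
      m * (m + 1) * (2 * m + 1) / (6 * c) - m * (m + 1) / 2 + m * c / 4 := by
  induction m with
  | zero => simp
  | succ m ih =>
    rw [Finset.sum_range_succ, ih]
    push_cast
    field_simp
    ring

lemma prod_Icc_two_mul_sq {f : ℕ → ℂ} {n : ℕ} (hn : 3 ≤ n) (hf : f (n - 1) = f 1) :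
    f 1 ^ 2 * ∏ j ∈ Finset.Icc 2 (n - 2), f j = ∏ j ∈ Finset.range (n - 1), f (j + 1) := by
  obtain ⟨m, rfl⟩ := Nat.exists_eq_add_of_le' hn
  rw [show m + 3 - 1 = m + 1 + 1 by omega] at *
  rw [Finset.prod_range_succ, Finset.prod_range_succ', hf, ← Finset.Ico_add_one_right_eq_Icc,
    Finset.prod_Ico_eq_prod_range, show m + 3 - 2 + 1 - 2 = m by omega]
  simp only [show ∀ k, 2 + k = k + 1 + 1 by intro k; ring]
  ring

theorem theta1_quotient_product (n : ℕ) (hn : 3 ≤ n) (τ : ℂ) (hτ : 0 < τ.im)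
    (q : ℂ) (hq : q = Complex.exp (Real.pi * Complex.I * τ))
    (τ' : ℂ) (hτ' : τ' = -1 / τ) :
    (theta1 ((Real.pi : ℂ) / n) (τ' / n)) ^ 2 *
        (∏ j ∈ Finset.Icc 2 (n - 2), theta1 ((j : ℂ) * Real.pi / n) (τ' / n)) /
        (theta1 ((Real.pi : ℂ) / 2) (τ' / n)) ^ (n - 1) =
      Complex.exp (Real.pi * Complex.I * τ * ((n : ℂ) - 2) * ((n : ℂ) - 1) / 12) *
        (qPoch (q ^ 2) (q ^ 2)) ^ 2 /
        ((qPoch (q ^ (2 * n)) (q ^ (2 * n))) ^ 2 *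
          (qPoch (q ^ n) (q ^ (2 * n))) ^ (2 * n - 2)) := by
  have hn0 : (n : ℂ) ≠ 0 := by
    exact_mod_cast (show n ≠ 0 by omega)
  have hτ0 : τ ≠ 0 := by rintro rfl; simp at hτ
  have hσ : 0 < ((n : ℂ) * τ).im := by
    have : (0 : ℝ) < n := by exact_mod_cast (show 0 < n by omega)
    simpa using mul_pos this hτ
  have hτn : τ' / n = -1 / (n * τ) := by rw [hτ']; field_simp
  have hq0 : q ≠ 0 := hq ▸ Complex.exp_ne_zero _
  have hq1 : ‖q‖ < 1 := by
    rw [hq, Complex.norm_exp, Real.exp_lt_one_iff]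
    simpa using mul_pos Real.pi_pos hτ
  have hpow : ∀ {k : ℕ}, k ≠ 0 → ‖q ^ k‖ < 1 := fun hk ↦ by
    rw [norm_pow]; exact pow_lt_one₀ (norm_nonneg q) hq1 hk
  have hqk : ∀ k : ℕ, q ^ k = cexp (k * (Real.pi * I * τ)) := fun k ↦ by
    rw [hq, Complex.exp_nat_mul]
  have hP : q ^ (2 * n) = cexp (2 * Real.pi * I * (n * τ)) := by
    rw [hqk]; congr 1; push_cast; ring
  have hP1 : ‖q ^ (2 * n)‖ < 1 := hpow (by omega)
  set P := q ^ (2 * n) with hPdef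
  set K := (-I * (n * τ)) ^ (1 / 2 : ℂ) * qPoch P P with hK
  have hPP : qPoch P P ≠ 0 := qPoch_ne_zero hP1 (one_sub_mul_pow_ne_zero hP1)
  have hK0 : K ≠ 0 := mul_ne_zero (by simp [Complex.cpow_eq_zero_iff, hτ0, hn0]) hPP
  have hH0 : qPoch (q ^ n) P ≠ 0 := by
    refine qPoch_ne_zero hP1 fun i h ↦ ?_
    have h1 : ‖q ^ (n + 2 * n * i)‖ < 1 := hpow (by omega)
    rw [pow_add, pow_mul, ← hPdef, ← sub_eq_zero.mp h, norm_one] at h1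
    exact lt_irrefl _ h1
  have hhalf : theta1 (Real.pi / 2) (τ' / n) = K * qPoch (q ^ n) P ^ 2 := by
    have hy : q ^ n = cexp (2 * Real.pi * I * (n * τ) * (1 / 2)) := by
      rw [hqk]; congr 1; ring
    have hd : P / q ^ n = q ^ n := by
      rw [hPdef, two_mul, pow_add, mul_div_cancel_right₀ _ (pow_ne_zero n hq0)]
    have h := theta1_pi_mul_neg_inv (1 / 2) hσ hP hy
    rw [hd, ← hτn, ← hK] at h
    rw [div_eq_mul_one_div, h]
    simp [sq]
  have htheta : ∀ j : ℕ, j ≤ n → theta1 (j * Real.pi / n) (τ' / n) =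
      K * cexp (Real.pi * I * τ * (n * ((j : ℂ) / n - 1 / 2) ^ 2)) *
        (qPoch ((q ^ 2) ^ j) P * qPoch ((q ^ 2) ^ (n - j)) P) := fun j hj ↦ by
    have hy : (q ^ 2) ^ j = cexp (2 * Real.pi * I * (n * τ) * (j / n)) := by
      rw [← pow_mul, hqk]; congr 1; push_cast; field_simp
    have hd : P / (q ^ 2) ^ j = (q ^ 2) ^ (n - j) := by
      rw [div_eq_iff (pow_ne_zero _ (pow_ne_zero _ hq0)), ← pow_add, Nat.sub_add_cancel hj, hPdef,
        pow_mul]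
    have h := theta1_pi_mul_neg_inv (j / n) hσ hP hy
    rw [hd, ← hτn, ← hK] at h
    rw [show (j : ℂ) * Real.pi / n = Real.pi * (j / n) by ring, h]
    congr 3
    ring
  have hsymm : theta1 ((n - 1 : ℕ) * Real.pi / n) (τ' / n) =
      theta1 ((1 : ℕ) * Real.pi / n) (τ' / n) := by
    rw [htheta _ (Nat.sub_le n 1), htheta 1 (by omega), Nat.sub_sub_self (by omega : 1 ≤ n),
      mul_comm (qPoch _ _), Nat.cast_sub (by omega : 1 ≤ n)]
    congr 3
    push_cast
    field_simp
    ring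
  have hqp : qPoch (q ^ 2) (q ^ 2) =
      (∏ j ∈ Finset.range (n - 1), qPoch ((q ^ 2) ^ (j + 1)) P) * qPoch P P := by
    rw [qPoch_self_eq_prod (hpow two_ne_zero) (show n ≠ 0 by omega),
      show n = n - 1 + 1 by omega, Finset.prod_range_succ]
    simp only [Nat.add_sub_cancel, ← pow_mul, hPdef]
    rw [Nat.sub_add_cancel (by omega : 1 ≤ n)]
  have hnum := prod_Icc_two_mul_sq (f := fun j ↦ theta1 (j * Real.pi / n) (τ' / n)) hn hsymm
  simp only [Nat.cast_one, one_mul] at hnum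
  have hrefl : ∏ j ∈ Finset.range (n - 1), qPoch ((q ^ 2) ^ (n - (j + 1))) P =
      ∏ j ∈ Finset.range (n - 1), qPoch ((q ^ 2) ^ (j + 1)) P := by
    rw [← Finset.prod_range_reflect]
    refine Finset.prod_congr rfl fun j hj ↦ ?_
    rw [Finset.mem_range] at hj
    congr 2
    omega
  have hexp : ∏ j ∈ Finset.range (n - 1),
      cexp (Real.pi * I * τ * (n * (((j + 1 : ℕ) : ℂ) / n - 1 / 2) ^ 2)) =
      cexp (Real.pi * I * τ * ((n : ℂ) - 2) * ((n : ℂ) - 1) / 12) := by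
    rw [← Complex.exp_sum, ← Finset.mul_sum, sum_mul_div_sub_half_sq hn0,
      Nat.cast_sub (by omega : 1 ≤ n)]
    congr 1
    push_cast
    field_simp
    ring
  clear_value K
  rw [hnum, Finset.prod_congr rfl fun j hj ↦ htheta (j + 1)
    (by rw [Finset.mem_range] at hj; omega), Finset.prod_mul_distrib, Finset.prod_mul_distrib,
    Finset.prod_mul_distrib, hexp, hrefl, hhalf, hqp, Finset.prod_const, Finset.card_range,
    show 2 * n - 2 = 2 * (n - 1) by omega, pow_mul, mul_pow]
  field_simp
end
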